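/- arXiv:2102.08476 — 2 statements merged into one kernel-verified Lean document; each statement's English description precedes it below -/
import Mathlib

section
/- Let d ≥ 1 and k ≥ 1 be integers and let C be a finite collection of distinct subsets of a finite universe U, each of cardinality at least 1 and at most d. For each i ∈ {1, ..., d}, let M_i be a maximal matching among {S ∈ C : |S| = i} (the sets of M_i are pairwise disjoint size-i sets of C, and every size-i set of C disjoint from all members of M_i belongs to M_i), let M'_i ⊆ M_i be any subset with |M'_i| = min(k + dk, |M_i|), and let D_i = {S ∈ C : S ∩ Y ≠ ∅ for some Y ∈ M'_i}. Let K = ⋃_{i=1}^{d} (D_i ∪ M'_i). Then f_k(K) = f_k(C) and g_k(K) = g_k(C); in particular K contains an optimal solution to both Max Coverage and Max Unique Coverage on C. -/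
/-!
The proof is an exchange argument. Let `A ⊆ C` have at most `k` members and suppose `S ∈ A` is not
in `K`; put `i = |S|`. Then `S` meets no member of `M' i`, so `M' i ≠ M i` by maximality of the
matching, whence `|M' i| = k + d k`. The sets of `A` other than `S` cover at most `d k` elements,
and each element lies in at most one set of the matching `M' i`, so some `Y ∈ M' i` is disjoint
from all of them (`exists_disjoint_of_card_lt`). Replacing `S` by `Y` does not increase the number
of sets, and decreases neither the coverage (`card_biUnion_le_exchange`) nor the unique coverage
(`card_uniquelyCovered_le_exchange`), because `|Y| = |S|` and all of `Y` is newly covered, exactly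
once. Since `Y ∈ K`, iterating moves all of `A` into `K`.
-/

/-- The maximum `k`-coverage of `C`: the maximum, over sub-collections `C' ⊆ C` with
`|C'| ≤ k`, of the number of elements covered by at least one set of `C'`. -/
def maxCoverage {U : Type*} [DecidableEq U] (k : ℕ) (C : Finset (Finset U)) : ℕ :=
  (C.powerset.filter (fun C' => C'.card ≤ k)).sup (fun C' => (C'.biUnion id).card)

/-- The maximum `k`-unique-coverage of `C`: the maximum, over sub-collections `C' ⊆ C` with
`|C'| ≤ k`, of the number of elements covered by exactly one set of `C'`. -/
def maxUniqueCoverage {U : Type*} [DecidableEq U] (k : ℕ) (C : Finset (Finset U)) : ℕ :=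
  (C.powerset.filter (fun C' => C'.card ≤ k)).sup
    (fun C' => ((C'.biUnion id).filter (fun u => (C'.filter (fun S => u ∈ S)).card = 1)).card)

/-- The set of elements belonging to exactly one member of `A`, written as in
`maxUniqueCoverage`. -/
def uniquelyCovered {U : Type*} [DecidableEq U] (A : Finset (Finset U)) : Finset U :=
  (A.biUnion id).filter (fun u => (A.filter (fun S => u ∈ S)).card = 1)

theorem mem_uniquelyCovered {U : Type*} [DecidableEq U] {A : Finset (Finset U)} {u : U} :
    u ∈ uniquelyCovered A ↔ (A.filter (fun S => u ∈ S)).card = 1 := by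
  simp only [uniquelyCovered, Finset.mem_filter, Finset.mem_biUnion, id, and_iff_right_iff_imp]
  intro h
  obtain ⟨S, hS⟩ := Finset.card_pos.1 (by omega : 0 < (A.filter (fun S => u ∈ S)).card)
  exact ⟨S, (Finset.mem_filter.1 hS).1, (Finset.mem_filter.1 hS).2⟩

/-- Pigeonhole: a set `W` meets at most `|W|` members of a matching. -/
theorem exists_disjoint_of_card_lt {U : Type*} [DecidableEq U] (N : Finset (Finset U))
    (hN : (N : Set (Finset U)).Pairwise (fun A B => Disjoint A B)) (W : Finset U)
    (h : W.card < N.card) : ∃ Y ∈ N, Disjoint Y W := by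
  by_contra! hcon
  have hex : ∀ Y : N, ∃ u ∈ Y.1, u ∈ W := fun Y =>
    Finset.not_disjoint_iff.1 (hcon Y.1 Y.2)
  choose f hfY hfW using hex
  have hinj : Function.Injective f := by
    intro Y Z hYZ
    by_contra hne
    exact Finset.disjoint_left.1 (hN Y.2 Z.2 (fun h => hne (Subtype.ext h)))
      (hfY Y) (hYZ ▸ hfY Z)
  have hle := Finset.card_le_card_of_injOn (s := N.attach) (t := W) f
    (fun Y _ => hfW Y) hinj.injOn
  rw [Finset.card_attach] at hle
  omega

theorem card_biUnion_le_exchange {U : Type*} [DecidableEq U] (A : Finset (Finset U))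
    (S Y : Finset U) (hcard : Y.card = S.card)
    (hY : Disjoint Y ((A.erase S).biUnion id)) :
    (A.biUnion id).card ≤ ((insert Y (A.erase S)).biUnion id).card := by
  have hsub : A.biUnion id ⊆ S ∪ (A.erase S).biUnion id := by
    intro u hu
    obtain ⟨T, hT, huT⟩ := Finset.mem_biUnion.1 hu
    by_cases hTS : T = S
    · subst hTS
      exact Finset.mem_union_left _ huT
    · exact Finset.mem_union_right _
        (Finset.mem_biUnion.2 ⟨T, Finset.mem_erase.2 ⟨hTS, hT⟩, huT⟩)
  rw [Finset.biUnion_insert, id, Finset.card_union_of_disjoint hY, hcard]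
  exact (Finset.card_le_card hsub).trans (Finset.card_union_le _ _)

theorem card_uniquelyCovered_le_exchange {U : Type*} [DecidableEq U] (A : Finset (Finset U))
    (S Y : Finset U) (hcard : Y.card = S.card)
    (hY : Disjoint Y ((A.erase S).biUnion id)) :
    (uniquelyCovered A).card ≤ (uniquelyCovered (insert Y (A.erase S))).card := by
  have h1 : uniquelyCovered A ⊆ S ∪ uniquelyCovered (A.erase S) := by
    intro u hu
    by_cases huS : u ∈ S
    · exact Finset.mem_union_left _ huS
    · refine Finset.mem_union_right _ (mem_uniquelyCovered.2 ?_)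
      rw [← mem_uniquelyCovered.1 hu]
      congr 1
      ext T
      simp only [Finset.mem_filter, Finset.mem_erase]
      constructor
      · exact fun h => ⟨h.1.2, h.2⟩
      · exact fun h => ⟨⟨fun e => huS (e ▸ h.2), h.1⟩, h.2⟩
  have h2 : Y ∪ uniquelyCovered (A.erase S) ⊆ uniquelyCovered (insert Y (A.erase S)) := by
    intro u hu
    rw [mem_uniquelyCovered]
    by_cases huY : u ∈ Y
    · rw [Finset.card_eq_one]
      refine ⟨Y, ?_⟩
      ext T
      simp only [Finset.mem_filter, Finset.mem_insert, Finset.mem_singleton]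
      constructor
      · rintro ⟨h | h, huT⟩
        · exact h
        · exact absurd (Finset.mem_biUnion.2 ⟨T, h, huT⟩) (Finset.disjoint_left.1 hY huY)
      · rintro rfl
        exact ⟨Or.inl rfl, huY⟩
    · rw [Finset.filter_insert, if_neg huY]
      exact mem_uniquelyCovered.1 ((Finset.mem_union.1 hu).resolve_left huY)
  have h3 : Disjoint Y (uniquelyCovered (A.erase S)) :=
    hY.mono_right (Finset.filter_subset _ _)
  calc (uniquelyCovered A).card ≤ S.card + (uniquelyCovered (A.erase S)).card :=
        (Finset.card_le_card h1).trans (Finset.card_union_le _ _)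
    _ = (Y ∪ uniquelyCovered (A.erase S)).card := by
        rw [Finset.card_union_of_disjoint h3, hcard]
    _ ≤ _ := Finset.card_le_card h2

/-- If every member outside `K` of a small sub-collection of `C` can be exchanged for a set of `K`
of the same size that is disjoint from the remaining members, then every small sub-collection of
`C` is dominated by one inside `K`, in coverage and in unique coverage simultaneously. -/
theorem exists_subset_of_exchange {U : Type*} [DecidableEq U] (k : ℕ) (C K : Finset (Finset U))
    (hKC : K ⊆ C)
    (hex : ∀ A ⊆ C, A.card ≤ k → ∀ S ∈ A, S ∉ K →
      ∃ Y ∈ K, Y.card = S.card ∧ Disjoint Y ((A.erase S).biUnion id))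
    (A : Finset (Finset U)) (hA : A ⊆ C) (hAk : A.card ≤ k) :
    ∃ B ⊆ K, B.card ≤ k ∧ (A.biUnion id).card ≤ (B.biUnion id).card ∧
      (uniquelyCovered A).card ≤ (uniquelyCovered B).card := by
  induction hn : (A \ K).card generalizing A with
  | zero =>
    exact ⟨A, Finset.sdiff_eq_empty_iff_subset.1 (Finset.card_eq_zero.1 hn), hAk, le_rfl, le_rfl⟩
  | succ n ih =>
    obtain ⟨S, hS⟩ := Finset.card_pos.1 (by omega : 0 < (A \ K).card)
    obtain ⟨hSA, hSK⟩ := Finset.mem_sdiff.1 hS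
    obtain ⟨Y, hYK, hcard, hY⟩ := hex A hA hAk S hSA hSK
    have hcardA : (insert Y (A.erase S)).card ≤ k := by
      have h1 := Finset.card_insert_le Y (A.erase S)
      have h2 := Finset.card_erase_add_one hSA
      omega
    have hsub : insert Y (A.erase S) ⊆ C :=
      Finset.insert_subset (hKC hYK) ((Finset.erase_subset _ _).trans hA)
    have hdiff : (insert Y (A.erase S) \ K).card = n := by
      rw [Finset.insert_sdiff_of_mem _ hYK, Finset.erase_sdiff_comm, Finset.card_erase_of_mem hS,
        hn, Nat.add_sub_cancel]
    obtain ⟨B, hBK, hBk, hB1, hB2⟩ := ih _ hsub hcardA hdiff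
    exact ⟨B, hBK, hBk, (card_biUnion_le_exchange A S Y hcard hY).trans hB1,
      (card_uniquelyCovered_le_exchange A S Y hcard hY).trans hB2⟩

/-- Both `maxCoverage` and `maxUniqueCoverage` are suprema of the form below; passing from `C` to
a sub-collection `K` that dominates it leaves such a supremum unchanged. -/
theorem sup_eq_sup_of_dominated {U : Type*} [DecidableEq U] (k : ℕ) (C K : Finset (Finset U))
    (hKC : K ⊆ C) (F : Finset (Finset U) → ℕ)
    (hdom : ∀ A ⊆ C, A.card ≤ k → ∃ B ⊆ K, B.card ≤ k ∧ F A ≤ F B) :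
    (K.powerset.filter (fun A => A.card ≤ k)).sup F =
      (C.powerset.filter (fun A => A.card ≤ k)).sup F := by
  apply le_antisymm
  · exact Finset.sup_mono (Finset.filter_subset_filter _ (Finset.powerset_mono.2 hKC))
  · refine Finset.sup_le fun A hA => ?_
    rw [Finset.mem_filter, Finset.mem_powerset] at hA
    obtain ⟨B, hBK, hBk, hle⟩ := hdom A hA.1 hA.2
    exact hle.trans (Finset.le_sup (f := F)
      (Finset.mem_filter.2 ⟨Finset.mem_powerset.2 hBK, hBk⟩))

/-- Let `d ≥ 1` and `k ≥ 1` be integers and let `C` be a finite collection of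
distinct subsets of a finite universe `U`, each of cardinality at least 1 and at most `d`.
For each `i ∈ {1, …, d}`, let `Mᵢ` be a maximal matching among `{S ∈ C : |S| = i}`, let
`M'ᵢ ⊆ Mᵢ` be any subset with `|M'ᵢ| = min(k + dk, |Mᵢ|)`, and let
`Dᵢ = {S ∈ C : S ∩ Y ≠ ∅ for some Y ∈ M'ᵢ}`. Let `K = ⋃_{i=1}^{d} (Dᵢ ∪ M'ᵢ)`. Then
`f_k(K) = f_k(C)` and `g_k(K) = g_k(C)`. -/
theorem stmt_8 {U : Type*} [DecidableEq U] [Fintype U]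
    (d k : ℕ) (hd : 1 ≤ d) (hk : 1 ≤ k)
    (C : Finset (Finset U)) (hC : ∀ S ∈ C, 1 ≤ S.card ∧ S.card ≤ d)
    (M M' : ℕ → Finset (Finset U))
    (hMsub : ∀ i ∈ Finset.Icc 1 d, M i ⊆ C.filter (fun S => S.card = i))
    (hMdisj : ∀ i ∈ Finset.Icc 1 d,
      ((M i : Set (Finset U)).Pairwise (fun A B => Disjoint A B)))
    (hMmax : ∀ i ∈ Finset.Icc 1 d,
      ∀ S ∈ C, S.card = i → (∀ Y ∈ M i, Disjoint S Y) → S ∈ M i)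
    (hM'sub : ∀ i ∈ Finset.Icc 1 d, M' i ⊆ M i)
    (hM'card : ∀ i ∈ Finset.Icc 1 d, (M' i).card = min (k + d * k) (M i).card)
    (K : Finset (Finset U))
    (hK : K = (Finset.Icc 1 d).biUnion (fun i =>
      (C.filter (fun S => ∃ Y ∈ M' i, (S ∩ Y).Nonempty)) ∪ M' i)) :
    maxCoverage k K = maxCoverage k C ∧
    maxUniqueCoverage k K = maxUniqueCoverage k C := by
  have hM'C : ∀ i ∈ Finset.Icc 1 d, ∀ Y ∈ M' i, Y ∈ C ∧ Y.card = i := fun i hi Y hY =>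
    Finset.mem_filter.1 (hMsub i hi (hM'sub i hi hY))
  have hmemK : ∀ S, S ∈ K ↔ ∃ i ∈ Finset.Icc 1 d,
      (S ∈ C ∧ ∃ Y ∈ M' i, (S ∩ Y).Nonempty) ∨ S ∈ M' i := by
    intro S
    simp only [hK, Finset.mem_biUnion, Finset.mem_union, Finset.mem_filter]
  have hKC : K ⊆ C := by
    intro S hS
    obtain ⟨i, hi, h | h⟩ := (hmemK S).1 hS
    · exact h.1
    · exact (hM'C i hi S h).1
  have hex : ∀ A ⊆ C, A.card ≤ k → ∀ S ∈ A, S ∉ K →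
      ∃ Y ∈ K, Y.card = S.card ∧ Disjoint Y ((A.erase S).biUnion id) := by
    intro A hA hAk S hSA hSK
    have hi : S.card ∈ Finset.Icc 1 d := Finset.mem_Icc.2 (hC S (hA hSA))
    have hne : M' S.card ≠ M S.card := by
      intro heq
      refine hSK ((hmemK S).2 ⟨S.card, hi, ?_⟩)
      by_cases hmeet : ∃ Y ∈ M' S.card, (S ∩ Y).Nonempty
      · exact Or.inl ⟨hA hSA, hmeet⟩
      · right
        rw [heq] at hmeet ⊢
        refine hMmax _ hi S (hA hSA) rfl fun Y hY => ?_
        rw [Finset.disjoint_iff_inter_eq_empty, ← Finset.not_nonempty_iff_eq_empty]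
        exact fun h => hmeet ⟨Y, hY, h⟩
    have hlt : (M' S.card).card < (M S.card).card :=
      Finset.card_lt_card ((hM'sub _ hi).ssubset_of_ne hne)
    have hW : ((A.erase S).biUnion id).card ≤ k * d :=
      (Finset.card_biUnion_le_card_mul _ _ d
        fun T hT => (hC T (hA (Finset.mem_of_mem_erase hT))).2).trans
        (Nat.mul_le_mul_right d ((Finset.card_le_card (Finset.erase_subset _ _)).trans hAk))
    have hcard := hM'card _ hi
    have hlt' : ((A.erase S).biUnion id).card < (M' S.card).card := by
      rw [mul_comm] at hW
      omega
    obtain ⟨Y, hY, hYd⟩ := exists_disjoint_of_card_lt (M' S.card)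
      ((hMdisj _ hi).mono (Finset.coe_subset.2 (hM'sub _ hi))) _ hlt'
    exact ⟨Y, (hmemK Y).2 ⟨_, hi, Or.inr hY⟩, (hM'C _ hi Y hY).2, hYd⟩
  have hdom := exists_subset_of_exchange k C K hKC hex
  constructor
  · refine sup_eq_sup_of_dominated k C K hKC (fun A => (A.biUnion id).card) fun A hA hAk => ?_
    obtain ⟨B, hBK, hBk, h, -⟩ := hdom A hA hAk
    exact ⟨B, hBK, hBk, h⟩
  · refine sup_eq_sup_of_dominated k C K hKC (fun A => (uniquelyCovered A).card)
      fun A hA hAk => ?_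
    obtain ⟨B, hBK, hBk, -, h⟩ := hdom A hA hAk
    exact ⟨B, hBK, hBk, h⟩
end

section
/- Let U be a finite universe, c ≥ 1 an integer, and χ : U → {1, ..., c} a coloring. Let C be a finite collection of distinct subsets of U. Call a set S ∈ C good (with respect to C and χ) if χ is injective on S and no element of ψ(C) \ S has a color lying in χ(S). Call a set R ⊆ U a replacement for S if χ is injective on R and the color image χ(R) equals χ(S). Suppose S₁, ..., S_g ∈ C are pairwise distinct and each is good with respect to C and χ, and R₁, ..., R_g are replacements for S₁, ..., S_g respectively. Let C' = (C \ {S₁, ..., S_g}) ∪ {R₁, ..., R_g}. Then |ψ(C')| ≥ |ψ(C)| and |ψ̃(C')| ≥ |ψ̃(C)|. -/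
/-!
A color occurring on a good set `S i` occurs at exactly one element of `ψ(C)`
(`eq_of_color_eq`). Send an element `u ∈ ψ(C)` to itself if it lies in no `S i`, and otherwise to
an element of color `χ u` in some `R i` with `u ∈ S i`. This map preserves colors, so it is
injective on `ψ(C)` (`card_le_of_recolor`).

It lands in `ψ(C')`, because a set of `C` covering an element outside every `S i` is never removed.
It also sends `ψ̃(C)` into `ψ̃(C')`. If `u` is in no `S i`, then its color is missing from all
`S i`, hence from all `R i`, so the sets covering `u` do not change. If `u` is uniquely covered by
`S i`, then `S i` is the only set of `C` meeting the color `χ u`, so `R i` is the only set of `C'`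
meeting that color.
-/

/-- The set of elements uniquely covered by the collection `C`, i.e., the elements belonging
to exactly one set of `C`. -/
def uniqueCover {U : Type*} [DecidableEq U] (C : Finset (Finset U)) : Finset U :=
  (C.biUnion id).filter (fun u => (C.filter (fun S => u ∈ S)).card = 1)

lemma mem_uniqueCover {U : Type*} [DecidableEq U] (C : Finset (Finset U)) (u : U) :
    u ∈ uniqueCover C ↔ ∃ T ∈ C, u ∈ T ∧ ∀ T' ∈ C, u ∈ T' → T' = T := by
  unfold uniqueCover
  simp only [Finset.mem_filter, Finset.mem_biUnion, id, Finset.card_eq_one]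
  constructor
  · rintro ⟨-, T, hT⟩
    have h : ∀ T', (T' ∈ C ∧ u ∈ T') ↔ T' = T := fun T' => by
      simpa only [Finset.mem_filter, Finset.mem_singleton] using Finset.ext_iff.1 hT T'
    exact ⟨T, ((h T).2 rfl).1, ((h T).2 rfl).2, fun T' h1 h2 => (h T').1 ⟨h1, h2⟩⟩
  · rintro ⟨T, hT, hu, h⟩
    refine ⟨⟨T, hT, hu⟩, T, ?_⟩
    ext T'
    simp only [Finset.mem_filter, Finset.mem_singleton]
    exact ⟨fun h' => h T' h'.1 h'.2, fun h' => h' ▸ ⟨hT, hu⟩⟩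

/-- A color of a good set `S` is carried by only one covered element. -/
lemma eq_of_color_eq {U K : Type*} [DecidableEq U] [DecidableEq K] {χ : U → K}
    {S V : Finset U} (hinj : Set.InjOn χ ↑S)
    (hdisj : Disjoint (S.image χ) ((V \ S).image χ)) {u w : U}
    (hu : u ∈ S) (hw : w ∈ V) (h : χ w = χ u) : w = u := by
  by_cases hwS : w ∈ S
  · exact hinj hwS hu h
  · exact absurd (h ▸ Finset.mem_image_of_mem χ (Finset.mem_sdiff.2 ⟨hw, hwS⟩))
      (Finset.disjoint_left.1 hdisj (Finset.mem_image_of_mem χ hu))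

/-- Color-preserving reassignment does not decrease cardinality, provided that it only moves
elements (those satisfying `P`) whose color is unique in `A`. -/
lemma card_le_of_recolor {U K : Type*} {χ : U → K} {A B : Finset U} {P : U → Prop}
    (hP : ∀ u ∈ A, P u → ∀ w ∈ A, χ w = χ u → w = u)
    (h : ∀ u ∈ A, ∃ v ∈ B, χ v = χ u ∧ (P u ∨ v = u)) : A.card ≤ B.card := by
  choose! f hfB hfχ hf using h
  refine Finset.card_le_card_of_injOn f hfB fun u hu w hw huw => ?_
  have hχ : χ u = χ w := by rw [← hfχ u hu, ← hfχ w hw, huw]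
  rcases hf u hu with hu' | hu'
  · exact (hP u hu hu' w hw hχ.symm).symm
  rcases hf w hw with hw' | hw'
  · exact hP w hw hw' u hu hχ
  · rw [← hu', ← hw', huw]

/-- Let `U` be a finite universe, `c ≥ 1` an integer, and `χ : U → {1,…,c}` a
coloring. Let `C` be a finite collection of distinct subsets of `U`. A set `S ∈ C` is good
(w.r.t. `C` and `χ`) if `χ` is injective on `S` and no element of `ψ(C) \ S` has a color in
`χ(S)`. A set `R ⊆ U` is a replacement for `S` if `χ` is injective on `R` and
`χ(R) = χ(S)`. Suppose `S₁, …, S_g ∈ C` are pairwise distinct and good, with replacements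
`R₁, …, R_g`. Let `C' = (C \ {S₁,…,S_g}) ∪ {R₁,…,R_g}`. Then `|ψ(C')| ≥ |ψ(C)|` and
`|ψ̃(C')| ≥ |ψ̃(C)|`. -/
theorem stmt_15 {U : Type*} [DecidableEq U] [Fintype U]
    (c : ℕ) (hc : 1 ≤ c) (χ : U → Fin c)
    (C : Finset (Finset U))
    (g : ℕ) (S R : Fin g → Finset U)
    (hSC : ∀ i, S i ∈ C) (hSinj : Function.Injective S)
    (hgood : ∀ i, Set.InjOn χ ↑(S i) ∧
      Disjoint ((S i).image χ) ((C.biUnion id \ S i).image χ))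
    (hrep : ∀ i, Set.InjOn χ ↑(R i) ∧ (R i).image χ = (S i).image χ)
    (C' : Finset (Finset U))
    (hC' : C' = (C \ Finset.image S Finset.univ) ∪ Finset.image R Finset.univ) :
    (C'.biUnion id).card ≥ (C.biUnion id).card ∧
    (uniqueCover C').card ≥ (uniqueCover C).card := by
  have key : ∀ u, (∃ i, u ∈ S i) → ∀ w ∈ C.biUnion id, χ w = χ u → w = u :=
    fun u ⟨i, hu⟩ w hw h => eq_of_color_eq (hgood i).1 (hgood i).2 hu hw h
  have mem_cover : ∀ {T u}, T ∈ C → u ∈ T → u ∈ C.biUnion id :=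
    fun hT hu => Finset.mem_biUnion.2 ⟨_, hT, hu⟩
  have mem_C' : ∀ T, T ∈ C' ↔ (T ∈ C ∧ ∀ i, S i ≠ T) ∨ ∃ i, R i = T := by
    intro T; simp [hC']
  have exR : ∀ i, ∀ u ∈ S i, ∃ v ∈ R i, χ v = χ u := fun i u hu =>
    Finset.mem_image.1 ((hrep i).2 ▸ Finset.mem_image_of_mem χ hu)
  have exS : ∀ i, ∀ v ∈ R i, ∃ u ∈ S i, χ u = χ v := fun i v hv =>
    Finset.mem_image.1 ((hrep i).2 ▸ Finset.mem_image_of_mem χ hv)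
  constructor
  · refine card_le_of_recolor (χ := χ) (P := fun u => ∃ i, u ∈ S i)
      (fun u _ => key u) fun u hu => ?_
    by_cases h : ∃ i, u ∈ S i
    · obtain ⟨i, hi⟩ := h
      obtain ⟨v, hv, hχ⟩ := exR i u hi
      exact ⟨v, Finset.mem_biUnion.2 ⟨R i, (mem_C' _).2 (.inr ⟨i, rfl⟩), hv⟩, hχ, .inl ⟨i, hi⟩⟩
    · obtain ⟨T, hT, huT⟩ := Finset.mem_biUnion.1 hu
      exact ⟨u, Finset.mem_biUnion.2
        ⟨T, (mem_C' _).2 (.inl ⟨hT, fun i hi => h ⟨i, hi ▸ huT⟩⟩), huT⟩, rfl, .inr rfl⟩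
  · have hsub : ∀ u ∈ uniqueCover C, u ∈ C.biUnion id := fun u hu => (Finset.mem_filter.1 hu).1
    refine card_le_of_recolor (χ := χ) (P := fun u => ∃ i, u ∈ S i)
      (fun u _ hP w hw => key u hP w (hsub w hw)) fun u hu => ?_
    have huC := hsub u hu
    obtain ⟨T, hT, huT, huniq⟩ := (mem_uniqueCover C u).1 hu
    by_cases h : ∃ i, u ∈ S i
    · obtain ⟨i, hi⟩ := h
      obtain ⟨v, hv, hχ⟩ := exR i u hi
      refine ⟨v, (mem_uniqueCover C' v).2
        ⟨R i, (mem_C' _).2 (.inr ⟨i, rfl⟩), hv, fun T' hT' hvT' => ?_⟩, hχ, .inl ⟨i, hi⟩⟩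
      have hTi := huniq _ (hSC i) hi
      rcases (mem_C' T').1 hT' with ⟨hT'C, hne⟩ | ⟨j, rfl⟩
      · have hvu := key u ⟨i, hi⟩ v (mem_cover hT'C hvT') hχ
        exact absurd (hTi.trans (huniq T' hT'C (hvu ▸ hvT')).symm) (hne i)
      · obtain ⟨w, hw, hwχ⟩ := exS j v hvT'
        have hwu := key u ⟨i, hi⟩ w (mem_cover (hSC j) hw) (hwχ.trans hχ)
        have hji : j = i := hSinj ((huniq _ (hSC j) (hwu ▸ hw)).trans hTi.symm)
        rw [hji]
    · refine ⟨u, (mem_uniqueCover C' u).2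
        ⟨T, (mem_C' _).2 (.inl ⟨hT, fun i hi => h ⟨i, hi ▸ huT⟩⟩), huT, fun T' hT' huT' => ?_⟩,
        rfl, .inr rfl⟩
      rcases (mem_C' T').1 hT' with ⟨hT'C, -⟩ | ⟨j, rfl⟩
      · exact huniq T' hT'C huT'
      · obtain ⟨w, hw, hwχ⟩ := exS j u huT'
        exact absurd ⟨j, key w ⟨j, hw⟩ u huC hwχ.symm ▸ hw⟩ h
end
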